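/- Every CNF formula in which every clause has at most 3 literals is equisatisfiable with some CNF formula in NAS-CNF form; that is, for every such formula φ there exists a formula ψ in NAS-CNF form such that φ is satisfiable if and only if ψ is satisfiable. (Correctness of the reduction from 3-SAT to NAS-SAT, the combinatorial content of Theorem 1.) -/

import Mathlib

/-!
The witness is an explicit syntactic reduction `nasReduce`, not one chosen by whether `φ` is
satisfiable.

Variable `i` of `φ` becomes variable `6 * i`, and the clause with index `j` owns the five private
variables `6 * j + 1, …, 6 * j + 5`. In a clause `l₀ ∨ l₁ ∨ l₂` each literal is replaced by a
private copy `pₖ` of the same polarity, tied to the original by the implication `pₖ → lₖ`; written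
as a clause, this implication has one positive and one negative literal whatever the polarity of
`lₖ`. The clause `p₀ ∨ p₁ ∨ p₂` is then split into `p₀ ∨ p₁ ∨ ¬q`, `q ∨ p₂ ∨ ¬r` and the unit `r`,
where `q` and `r` are private literals of the same polarity as `l₀`, so both ternary clauses have
mixed polarity. Clauses of size 2 are treated in the same way with `p₀ ∨ p₁ ∨ ¬r` and `r`; shorter
clauses are only renamed. Ternary clauses of the output contain only private literals, each of them
once, which gives the occurrence bound (`countP_gadget`, `countP_nasReduceFrom`).

Equisatisfiability is checked clause by clause: a model of the output restricts to the multiples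
of 6 (`clauseSat_of_gadget`), and a model of `φ` extends to the private variables by `privateVal`
(`gadget_sat`).
-/

/-- A literal is a variable index together with a polarity:
`(i, true)` is the positive literal `xᵢ`, `(i, false)` is `¬xᵢ`. -/
abbrev Lit : Type := ℕ × Bool

/-- A clause is a finite list of literals. -/
abbrev Clause : Type := List Lit

/-- A CNF formula is a finite list of clauses. -/
abbrev CNF : Type := List Clause

/-- A clause is satisfied by `σ` if some literal in it evaluates to true. -/
def ClauseSat (σ : ℕ → Bool) (c : Clause) : Prop := ∃ l ∈ c, σ l.1 = l.2

/-- A CNF formula is satisfied by `σ` if every clause is satisfied. -/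
def CNFSat (σ : ℕ → Bool) (φ : CNF) : Prop := ∀ c ∈ φ, ClauseSat σ c

/-- A formula is satisfiable if some assignment satisfies it. -/
def Satisfiable (φ : CNF) : Prop := ∃ σ : ℕ → Bool, CNFSat σ φ

/-- A CNF formula is in NAS-CNF form if every clause has at most 3 literals,
every clause with at least 2 literals contains a positive and a negative
literal, and every literal appears in at most one clause of size 3. -/
def NASForm (φ : CNF) : Prop :=
  (∀ c ∈ φ, c.length ≤ 3) ∧
  (∀ c ∈ φ, 2 ≤ c.length →
    (∃ l ∈ c, l.2 = true) ∧ (∃ l ∈ c, l.2 = false)) ∧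
  (∀ l : Lit, (φ.countP (fun c => decide (c.length = 3 ∧ l ∈ c))) ≤ 1)

/-- The binary clause expressing that the literal on variable `p` with the polarity of `l` implies
the renamed literal `l`. -/
def link (p : ℕ) (l : Lit) : Clause := [(p, !l.2), (6 * l.1, l.2)]

/-- The clauses replacing the clause with index `j`: its literals are copied to the variables
`6 * j + 1`, `6 * j + 2`, `6 * j + 3`, while `6 * j + 4` and `6 * j + 5` carry the splitting
literals `q` and `r`. -/
def gadget (j : ℕ) : Clause → CNF
  | [a, b, c] =>
    [link (6 * j + 1) a, link (6 * j + 2) b, link (6 * j + 3) c,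
      [(6 * j + 1, a.2), (6 * j + 2, b.2), (6 * j + 4, !a.2)],
      [(6 * j + 4, a.2), (6 * j + 3, c.2), (6 * j + 5, !a.2)],
      [(6 * j + 5, a.2)]]
  | [a, b] =>
    [link (6 * j + 1) a, link (6 * j + 2) b,
      [(6 * j + 1, a.2), (6 * j + 2, b.2), (6 * j + 5, !a.2)],
      [(6 * j + 5, a.2)]]
  | c => [c.map fun l => (6 * l.1, l.2)]

/-- The reduction, with clauses indexed from `j` on. -/
def nasReduceFrom : ℕ → CNF → CNF
  | _, [] => []
  | j, c :: φ => gadget j c ++ nasReduceFrom (j + 1) φ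

/-- The reduction from 3-SAT to NAS-SAT. -/
def nasReduce (φ : CNF) : CNF := nasReduceFrom 0 φ

/-- The value given to the private variable `6 * j + k` of a clause when `σ` satisfies that clause:
copies take the value of the original variable, `r` is made true, and `q` is made true exactly when
one of the first two literals is. Values at `k = 0` and `k > 5` are irrelevant. -/
def privateVal (σ : ℕ → Bool) (c : Clause) (k : ℕ) : Bool :=
  match c, k with
  | a :: _, 1 => σ a.1
  | _ :: b :: _, 2 => σ b.1
  | _ :: _ :: c :: _, 3 => σ c.1
  | a :: b :: _, 4 => if σ a.1 = a.2 ∨ σ b.1 = b.2 then a.2 else !a.2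
  | a :: _, 5 => a.2
  | _, _ => false

theorem clause_cases {c : Clause} (h : c.length ≤ 3) :
    c = [] ∨ (∃ a, c = [a]) ∨ (∃ a b, c = [a, b]) ∨ ∃ a b d, c = [a, b, d] := by
  match c, h with
  | [], _ => simp
  | [a], _ => simp
  | [a, b], _ => simp
  | [a, b, d], _ => simp
  | _ :: _ :: _ :: _ :: _, h => simp only [List.length_cons] at h; omega

theorem mem_nasReduceFrom {d : Clause} {φ : CNF} {j : ℕ} :
    d ∈ nasReduceFrom j φ ↔ ∃ m c, φ[m]? = some c ∧ d ∈ gadget (j + m) c := by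
  induction φ generalizing j with
  | nil => simp [nasReduceFrom]
  | cons c φ ih =>
    simp only [nasReduceFrom, List.mem_append, ih]
    constructor
    · rintro (h | ⟨m, e, he, hd⟩)
      · exact ⟨0, c, by simp, by simpa using h⟩
      · exact ⟨m + 1, e, by simpa using he, by
          rwa [show j + (m + 1) = j + 1 + m by omega]⟩
    · rintro ⟨m, e, he, hd⟩
      cases m with
      | zero =>
        simp only [List.getElem?_cons_zero, Option.some.injEq] at he
        subst he
        exact Or.inl (by simpa using hd)
      | succ m =>
        exact Or.inr ⟨m, e, by simpa using he, by
          rwa [show j + 1 + m = j + (m + 1) by omega]⟩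

theorem gadget_form {c d : Clause} {j : ℕ} (hc : c.length ≤ 3) (hd : d ∈ gadget j c) :
    d.length ≤ 3 ∧ (2 ≤ d.length → (∃ l ∈ d, l.2 = true) ∧ ∃ l ∈ d, l.2 = false) := by
  rcases clause_cases hc with rfl | ⟨a, rfl⟩ | ⟨a, b, rfl⟩ | ⟨a, b, e, rfl⟩
  · simp_all [gadget]
  · simp_all [gadget]
  · obtain ⟨x, p⟩ := a
    obtain ⟨y, q⟩ := b
    simp only [gadget, link, List.mem_cons, List.not_mem_nil, or_false] at hd
    rcases hd with rfl | rfl | rfl | rfl <;> cases p <;> cases q <;> simp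
  · obtain ⟨x, p⟩ := a
    obtain ⟨y, q⟩ := b
    obtain ⟨z, r⟩ := e
    simp only [gadget, link, List.mem_cons, List.not_mem_nil, or_false] at hd
    rcases hd with rfl | rfl | rfl | rfl | rfl | rfl <;> cases p <;> cases q <;> cases r <;> simp

/-- A literal occurs in at most one ternary clause of a gadget, and in none unless it is private to
that gadget. -/
theorem countP_gadget {c : Clause} (j : ℕ) (hc : c.length ≤ 3) (l : Lit) :
    (gadget j c).countP (fun c => decide (c.length = 3 ∧ l ∈ c)) ≤
      if l.1 / 6 = j then 1 else 0 := by
  obtain ⟨n, s⟩ := l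
  rcases clause_cases hc with rfl | ⟨a, rfl⟩ | ⟨a, b, rfl⟩ | ⟨a, b, e, rfl⟩
  · simp [gadget]
  · simp [gadget]
  · simp only [gadget, link, List.countP_cons, List.countP_nil, List.length_cons, List.length_nil,
      List.mem_cons, List.not_mem_nil, Prod.mk.injEq, decide_eq_true_eq]
    grind
  · simp only [gadget, link, List.countP_cons, List.countP_nil, List.length_cons, List.length_nil,
      List.mem_cons, List.not_mem_nil, Prod.mk.injEq, decide_eq_true_eq]
    grind

theorem countP_nasReduceFrom {φ : CNF} (h3 : ∀ c ∈ φ, c.length ≤ 3) (j : ℕ) (l : Lit) :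
    (nasReduceFrom j φ).countP (fun c => decide (c.length = 3 ∧ l ∈ c)) ≤
      if j ≤ l.1 / 6 then 1 else 0 := by
  induction φ generalizing j with
  | nil => simp [nasReduceFrom]
  | cons c φ ih =>
    rw [nasReduceFrom, List.countP_append]
    have h1 := countP_gadget j (h3 c (by simp)) l
    have h2 := ih (fun d hd => h3 d (by simp [hd])) (j + 1)
    split_ifs at * <;> omega

theorem clauseSat_of_gadget {σ : ℕ → Bool} {c : Clause} {j : ℕ} (hc : c.length ≤ 3)
    (h : CNFSat σ (gadget j c)) : ClauseSat (fun i => σ (6 * i)) c := by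
  rcases clause_cases hc with rfl | ⟨a, rfl⟩ | ⟨a, b, rfl⟩ | ⟨a, b, e, rfl⟩ <;>
    simp [CNFSat, ClauseSat, gadget, link] at h ⊢ <;> grind

/-- If `τ` agrees with `σ` on renamed variables and with `privateVal` on the private variables of
the gadget of a clause satisfied by `σ`, then `τ` satisfies that gadget. -/
theorem gadget_sat {σ τ : ℕ → Bool} {c : Clause} {j : ℕ} (hc : c.length ≤ 3)
    (hσ : ClauseSat σ c) (h0 : ∀ i, τ (6 * i) = σ i)
    (hp : ∀ k, 1 ≤ k → k ≤ 5 → τ (6 * j + k) = privateVal σ c k) : CNFSat τ (gadget j c) := by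
  have h1 := hp 1 (by omega) (by omega)
  have h2 := hp 2 (by omega) (by omega)
  have h3 := hp 3 (by omega) (by omega)
  have h4 := hp 4 (by omega) (by omega)
  have h5 := hp 5 (by omega) (by omega)
  clear hp
  rcases clause_cases hc with rfl | ⟨a, rfl⟩ | ⟨a, b, rfl⟩ | ⟨a, b, e, rfl⟩
  · simp [ClauseSat] at hσ
  · simpa [CNFSat, ClauseSat, gadget, h0] using hσ
  · simp only [privateVal] at h1 h2 h5
    simp only [CNFSat, ClauseSat, gadget, link, List.forall_mem_cons, List.exists_mem_cons_iff,
      List.not_mem_nil, false_and, exists_false, or_false, h0, h1, h2, h5] at hσ ⊢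
    clear h1 h2 h3 h4 h5
    generalize σ a.1 = u, σ b.1 = v, a.2 = p, b.2 = q at hσ ⊢
    revert u v p q
    simp
  · simp only [privateVal] at h1 h2 h3 h4 h5
    simp only [CNFSat, ClauseSat, gadget, link, List.forall_mem_cons, List.exists_mem_cons_iff,
      List.not_mem_nil, false_and, exists_false, or_false, h0, h1, h2, h3, h4, h5] at hσ ⊢
    clear h1 h2 h3 h4 h5
    generalize σ a.1 = u, σ b.1 = v, σ e.1 = w, a.2 = p, b.2 = q, e.2 = r at hσ ⊢
    revert u v w p q r
    simp

theorem nasReduce_form {φ : CNF} (h3 : ∀ c ∈ φ, c.length ≤ 3) : NASForm (nasReduce φ) := by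
  have key : ∀ d ∈ nasReduce φ, d.length ≤ 3 ∧
      (2 ≤ d.length → (∃ l ∈ d, l.2 = true) ∧ ∃ l ∈ d, l.2 = false) := by
    intro d hd
    obtain ⟨m, c, hc, hd⟩ := mem_nasReduceFrom.1 hd
    exact gadget_form (h3 c (List.mem_of_getElem? hc)) hd
  refine ⟨fun d hd => (key d hd).1, fun d hd => (key d hd).2, fun l => ?_⟩
  simpa [nasReduce] using countP_nasReduceFrom h3 0 l

theorem satisfiable_nasReduce_iff {φ : CNF} (h3 : ∀ c ∈ φ, c.length ≤ 3) :
    Satisfiable φ ↔ Satisfiable (nasReduce φ) := by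
  constructor
  · rintro ⟨σ, hσ⟩
    refine ⟨fun n => if n % 6 = 0 then σ (n / 6)
      else privateVal σ (φ.getD (n / 6) []) (n % 6), fun d hd => ?_⟩
    obtain ⟨m, c, hc, hd⟩ := mem_nasReduceFrom.1 hd
    rw [Nat.zero_add] at hd
    have hmem := List.mem_of_getElem? hc
    refine gadget_sat (h3 c hmem) (hσ c hmem) (fun i => by simp) (fun k hk1 hk5 => ?_) d hd
    have hdiv : (6 * m + k) / 6 = m := by omega
    have hmod : (6 * m + k) % 6 = k := by omega
    have hk : k ≠ 0 := by omega
    simp only [hdiv, hmod, hk, if_false, List.getD_eq_getElem?_getD, hc, Option.getD_some]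
  · rintro ⟨σ, hσ⟩
    refine ⟨fun i => σ (6 * i), fun c hc => ?_⟩
    obtain ⟨m, hm⟩ := List.mem_iff_getElem?.1 hc
    exact clauseSat_of_gadget (j := 0 + m) (h3 c hc)
      fun d hd => hσ d (mem_nasReduceFrom.2 ⟨m, c, hm, hd⟩)

/-- Every CNF formula with clauses of at most 3 literals is equisatisfiable
with some formula in NAS-CNF form (the combinatorial content of Theorem 1,
correctness of the reduction from 3-SAT to NAS-SAT). -/
theorem threeSat_to_nasSat (φ : CNF) (h3 : ∀ c ∈ φ, c.length ≤ 3) :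
    ∃ ψ : CNF, NASForm ψ ∧ (Satisfiable φ ↔ Satisfiable ψ) := by
  exact ⟨nasReduce φ, nasReduce_form h3, satisfiable_nasReduce_iff h3⟩
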